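/- arXiv:1003.5316 — 7 statements merged into one kernel-verified Lean document; each statement's English description precedes it below -/
import Mathlib

section
/- Let A be a nonconstant monic polynomial over 𝔽₂ with ω(A) ≤ 3. Then A is unitary perfect if and only if there exists n ∈ ℕ such that A(x) = B(x)^(2^n) or A(x) = B(x+1)^(2^n), where B is one of the following polynomials: x(x+1); x³(x+1)²(x²+x+1); x⁵(x+1)⁴(x⁴+x³+x²+x+1); x³(x+1)³(x²+x+1)². -/
open Polynomial
open scoped Classical

/-- The sum of all unitary divisors of `A`: monic divisors `d` of `A` with
`gcd(d, A/d) = 1`. -/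
noncomputable def sigmaStar (A : Polynomial (ZMod 2)) : Polynomial (ZMod 2) :=
  ∑ᶠ d ∈ {d : Polynomial (ZMod 2) | d.Monic ∧ d ∣ A ∧ IsCoprime d (A / d)}, d

/-- `A` is unitary perfect if `σ*(A) = A`. -/
def UnitaryPerfect (A : Polynomial (ZMod 2)) : Prop :=
  sigmaStar A = A

/-- `ω(A)`: the number of distinct monic irreducible factors of `A`. -/
noncomputable def omega (A : Polynomial (ZMod 2)) : ℕ :=
  (UniqueFactorizationMonoid.normalizedFactors A).toFinset.card

/-!
By the product formula `σ*(∏ Pᵢ ^ aᵢ) = ∏ (1 + Pᵢ ^ aᵢ)` (`sigmaStar_prod`), unitary perfection is an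
identity between two products of polynomials. Looking at it modulo `x` and `x + 1` shows that both
linear polynomials divide `A` (`unitaryPerfect_primes`), so `A = x ^ a (x + 1) ^ b P ^ c` with at most
one further prime `P`, and `(1 + x ^ a) (1 + (x + 1) ^ b) (1 + P ^ c) = x ^ a (x + 1) ^ b P ^ c`.

Write `a = 2 ^ e m` with `m` odd. Then `1 + x ^ a = ((x + 1) S) ^ 2 ^ e` with
`S = 1 + x + ⋯ + x ^ (m - 1)` squarefree and prime to `x (x + 1)`; its only possible prime factor is
`P`, so `S = 1` or `S = P` (`exponent_shape`). The same holds for `b` after the substitution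
`x ↦ x + 1`. A similar argument shows that `c` is a power of two (`exponent_shape'`), so that `1 + P`
is a product of powers of `x` and `x + 1`. If `P = S`, this forces `m = 2 ^ r + 1` and
`1 + P = x (x + 1) ^ (2 ^ r - 1)` (`one_add_geomPoly`).

* If `P` divides `1 + x ^ a` but not `1 + (x + 1) ^ b`, comparison of exponents determines `A` from
  `r` and `e`, and irreducibility of `1 + x + ⋯ + x ^ (2 ^ r)` forces `r ≤ 2`
  (`le_two_of_irreducible`). This gives the second and third polynomials of the list; exchanging the
  roles of `x` and `x + 1` gives their translates.
* If `P` divides both, then `1 + P` is also `(x + 1) x ^ (2 ^ s - 1)`, whence `P = x ^ 2 + x + 1`, and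
  comparison of exponents gives the fourth polynomial.
* Without `P`, the exponents `a` and `b` are equal powers of two (`solve_two`).

The converse is a direct verification, since the identity is stable under squaring and under
`x ↦ x + 1`.
-/

/-! ### Polynomials over `𝔽₂`: units and monic polynomials -/

/-- The only unit of `𝔽₂[x]` is `1`, so associated polynomials are equal. -/
instance subsingleton_units : Subsingleton (ZMod 2)[X]ˣ := by
  refine ⟨fun u v => Units.ext ?_⟩
  have key : ∀ w : (ZMod 2)[X]ˣ, (w : (ZMod 2)[X]) = 1 := by
    intro w
    obtain ⟨r, hr, h⟩ := Polynomial.isUnit_iff.1 w.isUnit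
    have hr1 : ∀ r : ZMod 2, r ≠ 0 → r = 1 := by decide
    have : r = 1 := hr1 r hr.ne_zero
    rw [← h, this, C_1]
  rw [key u, key v]

lemma monic_of_ne_zero {f : (ZMod 2)[X]} (hf : f ≠ 0) : f.Monic := by
  have h : f.leadingCoeff ≠ 0 := leadingCoeff_ne_zero.2 hf
  have key : ∀ r : ZMod 2, r ≠ 0 → r = 1 := by decide
  exact key _ h

lemma eq_of_irreducible_dvd {p q : (ZMod 2)[X]} (hp : Irreducible p) (hq : Irreducible q)
    (h : p ∣ q) : p = q :=
  associated_iff_eq.1 ((hp.dvd_irreducible_iff_associated hq).1 h)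

/-! ### The sum of unitary divisors -/

/-- The set of unitary divisors of `A`. -/
def unitaryDivisors (A : (ZMod 2)[X]) : Set (ZMod 2)[X] :=
  {d | d.Monic ∧ d ∣ A ∧ IsCoprime d (A / d)}

lemma mem_unitaryDivisors {A d : (ZMod 2)[X]} (hA : A ≠ 0) :
    d ∈ unitaryDivisors A ↔ ∃ e, d * e = A ∧ IsCoprime d e := by
  constructor
  · rintro ⟨hd, ⟨e, rfl⟩, hc⟩
    rw [mul_div_cancel_left₀ _ hd.ne_zero] at hc
    exact ⟨e, rfl, hc⟩
  · rintro ⟨e, rfl, hc⟩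
    have hd : d ≠ 0 := left_ne_zero_of_mul hA
    refine ⟨monic_of_ne_zero hd, dvd_mul_right _ _, ?_⟩
    rwa [mul_div_cancel_left₀ _ hd]

/-- A unitary divisor of `P ^ a * B` contains either no factor `P` or the full power `P ^ a`. -/
lemma unitaryDivisors_mul {P B : (ZMod 2)[X]} (hP : Irreducible P) (hB : B ≠ 0) (hPB : ¬ P ∣ B)
    (a : ℕ) :
    unitaryDivisors (P ^ a * B) =
      unitaryDivisors B ∪ (fun d => P ^ a * d) '' unitaryDivisors B := by
  have hPa : P ^ a ≠ 0 := pow_ne_zero _ hP.ne_zero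
  have hcop : ∀ d, ¬ P ∣ d → IsCoprime (P ^ a) d := fun d hd =>
    IsCoprime.pow_left ((hP.coprime_iff_not_dvd).2 hd)
  ext d
  rw [Set.mem_union, mem_unitaryDivisors (mul_ne_zero hPa hB), mem_unitaryDivisors hB, Set.mem_image]
  constructor
  · rintro ⟨e, hde, hc⟩
    by_cases hd : P ∣ d
    · right
      have he : ¬ P ∣ e := fun he => hP.not_isUnit (hc.isUnit_of_dvd' hd he)
      obtain ⟨d', rfl⟩ : P ^ a ∣ d :=
        (hcop e he).dvd_of_dvd_mul_right (hde ▸ dvd_mul_right _ _)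
      refine ⟨d', (mem_unitaryDivisors hB).2 ⟨e, ?_, hc.of_mul_left_right⟩, rfl⟩
      exact mul_left_cancel₀ hPa (by rw [← mul_assoc, hde])
    · left
      obtain ⟨e', rfl⟩ : P ^ a ∣ e :=
        (hcop d hd).dvd_of_dvd_mul_left (hde ▸ dvd_mul_right _ _)
      refine ⟨e', ?_, hc.of_mul_right_right⟩
      exact mul_left_cancel₀ hPa (by rw [← hde]; ring)
  · rintro (⟨e, rfl, hc⟩ | ⟨d', hd', rfl⟩)
    · refine ⟨P ^ a * e, by ring, IsCoprime.mul_right ?_ hc⟩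
      exact (hcop d fun h => hPB (h.mul_right _)).symm
    · obtain ⟨e, rfl, hc⟩ := (mem_unitaryDivisors hB).1 hd'
      refine ⟨e, by ring, IsCoprime.mul_left ?_ hc⟩
      exact hcop e fun h => hPB (h.mul_left _)

lemma unitaryDivisors_one : unitaryDivisors 1 = {1} := by
  ext d
  rw [mem_unitaryDivisors one_ne_zero, Set.mem_singleton_iff]
  constructor
  · rintro ⟨e, h, -⟩
    exact eq_one_of_mul_right h
  · rintro rfl
    exact ⟨1, by simp, isCoprime_one_left⟩

lemma sigmaStar_one : sigmaStar 1 = 1 := by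
  change ∑ᶠ d ∈ unitaryDivisors 1, d = 1
  rw [unitaryDivisors_one, finsum_mem_singleton]

lemma sigmaStar_mul {P B : (ZMod 2)[X]} (hP : Irreducible P) (hB : B ≠ 0) (hPB : ¬ P ∣ B)
    {a : ℕ} (ha : a ≠ 0) (hfin : (unitaryDivisors B).Finite) :
    sigmaStar (P ^ a * B) = (1 + P ^ a) * sigmaStar B := by
  change ∑ᶠ d ∈ unitaryDivisors (P ^ a * B), d = (1 + P ^ a) * ∑ᶠ d ∈ unitaryDivisors B, d
  have hPa : P ^ a ≠ 0 := pow_ne_zero _ hP.ne_zero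
  rw [unitaryDivisors_mul hP hB hPB a, finsum_mem_union _ hfin (hfin.image _),
    finsum_mem_image (fun x _ y _ h => mul_left_cancel₀ hPa h), ← mul_finsum_mem, add_mul, one_mul]
  rw [Set.disjoint_left]
  rintro _ h ⟨d, -, rfl⟩
  obtain ⟨e, he, -⟩ := (mem_unitaryDivisors hB).1 h
  exact hPB (he ▸ ((dvd_pow_self P ha).mul_right d).mul_right e)

/-- The product formula `σ*(∏ Pᵢ ^ aᵢ) = ∏ (1 + Pᵢ ^ aᵢ)`. -/
lemma sigmaStar_prod (s : Finset (ZMod 2)[X]) (n : (ZMod 2)[X] → ℕ)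
    (hs : ∀ P ∈ s, Irreducible P ∧ n P ≠ 0) :
    (unitaryDivisors (∏ P ∈ s, P ^ n P)).Finite ∧
      sigmaStar (∏ P ∈ s, P ^ n P) = ∏ P ∈ s, (1 + P ^ n P) := by
  induction s using Finset.induction_on with
  | empty => simp [unitaryDivisors_one, sigmaStar_one]
  | insert P s hPs ih =>
    have hs' : ∀ Q ∈ s, Irreducible Q ∧ n Q ≠ 0 := fun Q hQ => hs Q (Finset.mem_insert_of_mem hQ)
    obtain ⟨hP, hn⟩ := hs P (Finset.mem_insert_self _ _)
    obtain ⟨hfin, hsum⟩ := ih hs'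
    have hB : ∏ Q ∈ s, Q ^ n Q ≠ 0 :=
      Finset.prod_ne_zero_iff.2 fun Q hQ => pow_ne_zero _ (hs' Q hQ).1.ne_zero
    have hPB : ¬ P ∣ ∏ Q ∈ s, Q ^ n Q := by
      intro h
      obtain ⟨Q, hQ, hPQ⟩ := (hP.prime.dvd_finsetProd_iff _).1 h
      exact hPs (eq_of_irreducible_dvd hP (hs' Q hQ).1 (hP.prime.dvd_of_dvd_pow hPQ) ▸ hQ)
    rw [Finset.prod_insert hPs, Finset.prod_insert hPs, sigmaStar_mul hP hB hPB hn hfin, hsum,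
      unitaryDivisors_mul hP hB hPB]
    exact ⟨hfin.union (hfin.image _), rfl⟩

/-! ### The substitution `x ↦ x + 1` and the equation in the exponents -/

lemma two_eq_zero : (2 : (ZMod 2)[X]) = 0 := CharTwo.two_eq_zero

lemma comp_comp_X_add_one (f : (ZMod 2)[X]) : (f.comp (X + 1)).comp (X + 1) = f := by
  rw [comp_assoc]
  have : (X + 1 : (ZMod 2)[X]).comp (X + 1) = X := by
    simp only [add_comp, X_comp, one_comp]
    linear_combination two_eq_zero
  rw [this, comp_X]

lemma X_add_one_comp : (X + 1 : (ZMod 2)[X]).comp (X + 1) = X := by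
  simpa using comp_comp_X_add_one X

lemma irreducible_comp {f : (ZMod 2)[X]} (hf : Irreducible f) : Irreducible (f.comp (X + 1)) := by
  have h := (MulEquiv.irreducible_iff (algEquivAevalXAddC (1 : ZMod 2)) (x := f)).2 hf
  simpa [algEquivAevalXAddC_apply, aeval_def, comp, eval₂_eq_eval_map] using h

lemma irreducible_X_add_one : Irreducible (X + 1 : (ZMod 2)[X]) := by
  simpa using irreducible_comp (irreducible_X (R := ZMod 2))

/-- `P` is an irreducible polynomial different from the two linear ones. -/
def NonlinearPrime (P : (ZMod 2)[X]) : Prop :=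
  Irreducible P ∧ P ≠ X ∧ P ≠ X + 1

/-- `x ^ a (x + 1) ^ b P ^ c` equals the product predicted by the formula for its `σ*`. -/
def BalancedAt (P : (ZMod 2)[X]) (a b c : ℕ) : Prop :=
  (1 + X ^ a) * (1 + (X + 1) ^ b) * (1 + P ^ c) = X ^ a * (X + 1) ^ b * P ^ c

lemma NonlinearPrime.comp {P : (ZMod 2)[X]} (h : NonlinearPrime P) :
    NonlinearPrime (P.comp (X + 1)) := by
  refine ⟨irreducible_comp h.1, fun h1 => h.2.2 ?_, fun h1 => h.2.1 ?_⟩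
  · rw [← comp_comp_X_add_one P, h1, X_comp]
  · rw [← comp_comp_X_add_one P, h1, X_add_one_comp]

lemma BalancedAt.comp {P : (ZMod 2)[X]} {a b c : ℕ} (h : BalancedAt P a b c) :
    BalancedAt (P.comp (X + 1)) b a c := by
  have := congrArg (fun f => f.comp (X + 1)) h
  simp only [mul_comp, add_comp, pow_comp, one_comp, X_comp] at this
  have h2 : (X + 1 + 1 : (ZMod 2)[X]) = X := by linear_combination two_eq_zero
  rw [h2] at this
  unfold BalancedAt
  linear_combination this

lemma NonlinearPrime.eval_zero {P : (ZMod 2)[X]} (h : NonlinearPrime P) : P.eval 0 = 1 := by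
  by_contra h0
  have h0 : P.eval 0 = 0 := by
    generalize P.eval 0 = r at h0; revert h0; revert r; decide
  have : X ∣ P := by rwa [X_dvd_iff, coeff_zero_eq_eval_zero]
  exact h.2.1 (eq_of_irreducible_dvd irreducible_X h.1 this).symm

lemma X_add_one_dvd_iff {f : (ZMod 2)[X]} : X + 1 ∣ f ↔ f.eval 1 = 0 := by
  have h : (X + 1 : (ZMod 2)[X]) = X - C 1 := by
    rw [C_1]; linear_combination two_eq_zero
  rw [h, dvd_iff_isRoot, IsRoot.def]

lemma NonlinearPrime.eval_one {P : (ZMod 2)[X]} (h : NonlinearPrime P) : P.eval 1 = 1 := by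
  by_contra h0
  have h0 : P.eval 1 = 0 := by
    generalize P.eval 1 = r at h0; revert h0; revert r; decide
  exact h.2.2 (eq_of_irreducible_dvd irreducible_X_add_one h.1 (X_add_one_dvd_iff.2 h0)).symm

/-- Every prime factor of `f` is one of `x`, `x + 1`, `P`. -/
def SupportedOn (P f : (ZMod 2)[X]) : Prop :=
  ∀ Q, Irreducible Q → Q ∣ f → Q = X ∨ Q = X + 1 ∨ Q = P

lemma SupportedOn.of_dvd {P f g : (ZMod 2)[X]} (h : SupportedOn P g) (hfg : f ∣ g) :
    SupportedOn P f := fun Q hQ hQf => h Q hQ (hQf.trans hfg)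

lemma supportedOn_prod {P : (ZMod 2)[X]} (hP : NonlinearPrime P) (a b c : ℕ) :
    SupportedOn P (X ^ a * (X + 1) ^ b * P ^ c) := by
  intro Q hQ h
  rcases hQ.prime.dvd_or_dvd h with h | h
  · rcases hQ.prime.dvd_or_dvd h with h | h
    · exact Or.inl (eq_of_irreducible_dvd hQ irreducible_X (hQ.prime.dvd_of_dvd_pow h))
    · exact Or.inr (Or.inl
        (eq_of_irreducible_dvd hQ irreducible_X_add_one (hQ.prime.dvd_of_dvd_pow h)))
  · exact Or.inr (Or.inr (eq_of_irreducible_dvd hQ hP.1 (hQ.prime.dvd_of_dvd_pow h)))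

lemma eq_one_of_no_factor {f : (ZMod 2)[X]} (hf : f ≠ 0) (h : ∀ Q, Irreducible Q → ¬ Q ∣ f) :
    f = 1 := by
  by_contra hne
  obtain ⟨Q, hQ, hQf⟩ := WfDvdMonoid.exists_irreducible_factor
    (fun hu => hne (isUnit_iff_eq_one.1 hu)) hf
  exact h Q hQ hQf

/-- The exponent of a prime in a factorization is unique. -/
lemma pow_mul_inj {p u v : (ZMod 2)[X]} (hp : Irreducible p) (hu : ¬ p ∣ u) (hv : ¬ p ∣ v)
    {a b : ℕ} (h : p ^ a * u = p ^ b * v) : a = b := by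
  wlog hab : a ≤ b generalizing a b u v
  · exact (this hv hu h.symm (by omega)).symm
  obtain ⟨k, rfl⟩ := Nat.exists_eq_add_of_le hab
  rw [pow_add, mul_assoc] at h
  have h' := mul_left_cancel₀ (pow_ne_zero _ hp.ne_zero) h
  rcases k with _ | k
  · rfl
  · exact absurd (h' ▸ ((dvd_pow_self p k.succ_ne_zero).mul_right v)) hu

lemma NonlinearPrime.exponents_inj {P : (ZMod 2)[X]} (hP : NonlinearPrime P) {a b c a' b' c' : ℕ}
    (h : X ^ a * (X + 1) ^ b * P ^ c = X ^ a' * (X + 1) ^ b' * P ^ c') :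
    a = a' ∧ b = b' ∧ c = c' := by
  have hX := irreducible_X (R := ZMod 2)
  have hY := irreducible_X_add_one
  have h0 := hP.eval_zero
  have h1 := hP.eval_one
  refine ⟨?_, ?_, ?_⟩
  · refine pow_mul_inj hX (u := (X + 1) ^ b * P ^ c) (v := (X + 1) ^ b' * P ^ c') ?_ ?_
      (by linear_combination h) <;>
    · rw [X_dvd_iff, coeff_zero_eq_eval_zero]; simp [h0]
  · refine pow_mul_inj hY (u := X ^ a * P ^ c) (v := X ^ a' * P ^ c') ?_ ?_
      (by linear_combination h) <;>
    · rw [X_add_one_dvd_iff]; simp [h1]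
  · have key : ∀ a b : ℕ, ¬ P ∣ X ^ a * (X + 1) ^ b := by
      intro a b hd
      rcases hP.1.prime.dvd_or_dvd hd with hd | hd
      · exact hP.2.1 (eq_of_irreducible_dvd hP.1 hX (hP.1.prime.dvd_of_dvd_pow hd))
      · exact hP.2.2 (eq_of_irreducible_dvd hP.1 hY (hP.1.prime.dvd_of_dvd_pow hd))
    exact pow_mul_inj hP.1 (key a b) (key a' b') (by linear_combination h)

/-! ### Shape of the three factors `1 + x ^ a`, `1 + (x + 1) ^ b`, `1 + P ^ c` -/

/-- The polynomial `1 + x + ⋯ + x ^ (m - 1)`. -/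
noncomputable def geomPoly (m : ℕ) : (ZMod 2)[X] := ∑ i ∈ Finset.range m, X ^ i

lemma geomPoly_mul (m : ℕ) : geomPoly m * (X + 1) = 1 + X ^ m := by
  have h := geom_sum_mul (X : (ZMod 2)[X]) m
  unfold geomPoly
  linear_combination h + (∑ i ∈ Finset.range m, X ^ i - 1) * two_eq_zero

lemma one_add_pow_two_pow (f : (ZMod 2)[X]) (n : ℕ) : 1 + f ^ 2 ^ n = (1 + f) ^ 2 ^ n := by
  rw [add_pow_char_pow, one_pow]

/-- If `m` is odd and `1 + x + ⋯ + x ^ (m - 1)` has no prime factor besides `x`, `x + 1`, `P`, then,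
being squarefree and prime to `x (x + 1)`, it is `1` or `P`. -/
lemma geomPoly_eq_of_supportedOn {P : (ZMod 2)[X]} {m : ℕ} (hm : Odd m)
    (h : SupportedOn P (geomPoly m)) : m = 1 ∨ geomPoly m = P := by
  have hm0 : m ≠ 0 := by rintro rfl; simp at hm
  have hcast : (m : ZMod 2) = 1 := by
    obtain ⟨k, rfl⟩ := hm
    push_cast
    rw [show (2 : ZMod 2) = 0 from rfl]; simp
  have hsq : Squarefree (geomPoly m) := by
    have hs : Squarefree (X ^ m - 1 : (ZMod 2)[X]) :=
      (X_pow_sub_one_separable_iff.2 (by rw [hcast]; exact one_ne_zero)).squarefree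
    refine hs.squarefree_of_dvd ⟨X - 1, (geom_sum_mul _ _).symm⟩
  have h0 : (geomPoly m).eval 0 = 1 := by
    obtain ⟨k, rfl⟩ := Nat.exists_eq_succ_of_ne_zero hm0
    simp [geomPoly, Finset.sum_range_succ', eval_finsetSum]
  have h1 : (geomPoly m).eval 1 = 1 := by
    simp [geomPoly, eval_finsetSum, hcast]
  have hfac : ∀ Q, Irreducible Q → Q ∣ geomPoly m → Q = P := by
    intro Q hQ hd
    rcases h Q hQ hd with rfl | rfl | rfl
    · rw [X_dvd_iff, coeff_zero_eq_eval_zero, h0] at hd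
      exact absurd hd one_ne_zero
    · rw [X_add_one_dvd_iff, h1] at hd
      exact absurd hd one_ne_zero
    · rfl
  by_cases hone : geomPoly m = 1
  · left
    have h2 := geomPoly_mul m
    rw [hone] at h2
    have h3 : (X : (ZMod 2)[X]) ^ m = X := by linear_combination -h2
    simpa using congrArg natDegree h3
  · right
    have hne : geomPoly m ≠ 0 := hsq.ne_zero
    obtain ⟨Q, hQ, T, hT⟩ := WfDvdMonoid.exists_irreducible_factor
      (fun hu => hone (isUnit_iff_eq_one.1 hu)) hne
    have hQP := hfac Q hQ ⟨T, hT⟩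
    subst hQP
    have hT1 : T = 1 := by
      refine eq_one_of_no_factor (right_ne_zero_of_mul (hT ▸ hne)) fun R hR hRT => ?_
      have hRP := hfac R hR (hT ▸ hRT.mul_left Q)
      subst hRP
      exact hR.not_isUnit (hsq R (hT ▸ mul_dvd_mul_left R hRT))
    rw [hT, hT1, mul_one]

/-- Shape of the exponent of `x` in a balanced product. -/
lemma exponent_shape {P : (ZMod 2)[X]} {a : ℕ} (ha : a ≠ 0) (h : SupportedOn P (1 + X ^ a)) :
    ∃ e m, Odd m ∧ a = 2 ^ e * m ∧ (m = 1 ∨ geomPoly m = P) := by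
  obtain ⟨e, m, hm, rfl⟩ := Nat.exists_eq_two_pow_mul_odd ha
  refine ⟨e, m, hm, rfl, geomPoly_eq_of_supportedOn hm (h.of_dvd ?_)⟩
  rw [mul_comm, pow_mul, one_add_pow_two_pow, ← geomPoly_mul, mul_pow]
  exact (dvd_pow_self _ (by positivity)).mul_right _

/-- The exponent of `P` in a balanced product is a power of two: for odd `l` the cofactor
`1 + P + ⋯ + P ^ (l - 1)` of `1 + P` is prime to `x`, `x + 1` and `P`. -/
lemma exponent_shape' {P : (ZMod 2)[X]} (hP : NonlinearPrime P) {c : ℕ} (hc : c ≠ 0)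
    (h : SupportedOn P (1 + P ^ c)) : ∃ g, c = 2 ^ g ∧ SupportedOn P (1 + P) := by
  obtain ⟨g, l, hl, rfl⟩ := Nat.exists_eq_two_pow_mul_odd hc
  have hcast : (l : ZMod 2) = 1 := by
    obtain ⟨k, rfl⟩ := hl
    push_cast
    rw [show (2 : ZMod 2) = 0 from rfl]; simp
  obtain ⟨S, hS⟩ : ∃ S, S = (geomPoly l).comp P := ⟨_, rfl⟩
  have hSmul : S * (P + 1) = 1 + P ^ l := by
    have := congrArg (fun f => f.comp P) (geomPoly_mul l)
    simpa [hS] using this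
  have hpow : 1 + P ^ (2 ^ g * l) = S ^ 2 ^ g * (P + 1) ^ 2 ^ g := by
    rw [mul_comm, pow_mul, one_add_pow_two_pow, ← hSmul, mul_pow]
  have hS1 : ∀ r : ZMod 2, P.eval r = 1 → S.eval r = 1 := by
    intro r hr
    simp [hS, hr, geomPoly, eval_finsetSum, hcast]
  have hPl : ¬ P ∣ 1 + P ^ l := fun hd => by
    have hl0 : l ≠ 0 := by rintro rfl; simp at hl
    exact hP.1.not_isUnit (isUnit_of_dvd_one ((dvd_add_left (dvd_pow_self P hl0)).1 hd))
  have hne : 1 + P ^ l ≠ 0 := fun h0 => hPl (h0 ▸ dvd_zero _)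
  have hSone : S = 1 := by
    refine eq_one_of_no_factor (left_ne_zero_of_mul (hSmul ▸ hne)) fun Q hQ hd => ?_
    have hd' : Q ∣ 1 + P ^ (2 ^ g * l) := by
      rw [hpow]
      exact (hd.trans (dvd_pow_self _ (by positivity))).mul_right _
    rcases h Q hQ hd' with rfl | rfl | rfl
    · rw [X_dvd_iff, coeff_zero_eq_eval_zero, hS1 0 hP.eval_zero] at hd
      exact absurd hd one_ne_zero
    · rw [X_add_one_dvd_iff, hS1 1 hP.eval_one] at hd
      exact absurd hd one_ne_zero
    · exact hPl (hSmul ▸ hd.mul_right _)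
  have hl1 : l = 1 := by
    rw [hSone] at hSmul
    have h3 : P ^ l = P := by linear_combination -hSmul
    have h4 := congrArg natDegree h3
    rw [natDegree_pow] at h4
    exact (Nat.mul_eq_right (Irreducible.natDegree_pos hP.1).ne').1 h4
  subst hl1
  refine ⟨g, by simp, h.of_dvd ?_⟩
  rw [mul_one, one_add_pow_two_pow]
  exact dvd_pow_self _ (by positivity)

lemma geomPoly_inj {m n : ℕ} (h : geomPoly m = geomPoly n) : m = n := by
  have h1 := geomPoly_mul m
  rw [h, geomPoly_mul n] at h1
  have h2 : (X : (ZMod 2)[X]) ^ n = X ^ m := by linear_combination h1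
  simpa using (congrArg natDegree h2).symm

lemma geomPoly_succ (n : ℕ) : geomPoly (n + 1) = X * geomPoly n + 1 := by
  unfold geomPoly
  exact geom_sum_succ

/-- If `P = 1 + x + ⋯ + x ^ (m - 1)` is irreducible and `1 + P` has only the prime factors `x` and
`x + 1`, then `m - 1` is a power of two. -/
lemma one_add_geomPoly {P : (ZMod 2)[X]} (hP : NonlinearPrime P) {m : ℕ} (hm : Odd m)
    (hmP : geomPoly m = P) (h : SupportedOn P (1 + P)) :
    ∃ r, r ≠ 0 ∧ m = 2 ^ r + 1 ∧ 1 + P = X * (X + 1) ^ (2 ^ r - 1) := by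
  obtain ⟨n, rfl⟩ : ∃ n, m = n + 1 := by
    obtain ⟨k, rfl⟩ := hm
    exact ⟨_, rfl⟩
  have h1P : 1 + P = X * geomPoly n := by
    rw [← hmP, geomPoly_succ]; linear_combination two_eq_zero
  have hn : n ≠ 0 := by
    rintro rfl
    apply hP.1.not_isUnit
    simp [← hmP, geomPoly]
  have hsup : SupportedOn P (1 + X ^ n) := by
    intro Q hQ hd
    rw [← geomPoly_mul] at hd
    rcases hQ.prime.dvd_or_dvd hd with hd | hd
    · exact h Q hQ (h1P ▸ hd.mul_left _)
    · exact Or.inr (Or.inl (eq_of_irreducible_dvd hQ irreducible_X_add_one hd))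
  obtain ⟨r, q, hq, rfl, hq'⟩ := exponent_shape hn hsup
  have hq1 : q = 1 := by
    refine hq'.resolve_right fun hqP => ?_
    have := geomPoly_inj (hqP.trans hmP.symm)
    have : 1 * q ≤ 2 ^ r * q := Nat.mul_le_mul_right _ Nat.one_le_two_pow
    omega
  subst hq1
  rw [mul_one] at *
  refine ⟨r, ?_, rfl, ?_⟩
  · rintro rfl
    exact absurd hm (by decide)
  · rw [h1P]
    congr 1
    have h2 := geomPoly_mul (2 ^ r)
    rw [one_add_pow_two_pow] at h2
    have h3 : 2 ^ r = (2 ^ r - 1) + 1 := (Nat.sub_add_cancel Nat.one_le_two_pow).symm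
    refine mul_right_cancel₀ irreducible_X_add_one.ne_zero (h2.trans ?_)
    rw [← pow_succ, ← h3, add_comm]

/-- `1 + x + ⋯ + x ^ (2 ^ r)` is reducible for `r ≥ 3`. A root `α` satisfies `α ^ (2 ^ r + 1) = 1`,
hence `α ^ 4 ^ r = α`, so the field generated by `α` has at most `4 ^ r` elements; it has
`2 ^ 2 ^ r` of them when the polynomial is irreducible. -/
lemma le_two_of_irreducible {r : ℕ} (h : Irreducible (geomPoly (2 ^ r + 1))) : r ≤ 2 := by
  obtain ⟨P, hP⟩ : ∃ P, P = geomPoly (2 ^ r + 1) := ⟨_, rfl⟩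
  rw [← hP] at h
  have : Fact (Irreducible P) := ⟨h⟩
  have hdeg : P.natDegree = 2 ^ r := by
    have h1 := congrArg natDegree (geomPoly_mul (2 ^ r + 1))
    have h2 : (X + 1 : (ZMod 2)[X]).natDegree = 1 := by
      rw [← C_1]; exact natDegree_X_add_C 1
    have h3 : (1 + X ^ (2 ^ r + 1) : (ZMod 2)[X]).natDegree = 2 ^ r + 1 := by
      rw [add_comm, ← C_1]; exact natDegree_X_pow_add_C
    rw [← hP, natDegree_mul h.ne_zero irreducible_X_add_one.ne_zero, h2, h3] at h1
    omega
  let pb := AdjoinRoot.powerBasis h.ne_zero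
  have : Module.Finite (ZMod 2) (AdjoinRoot P) := pb.finite
  have : Finite (AdjoinRoot P) := Module.finite_of_finite (ZMod 2)
  have : Fintype (AdjoinRoot P) := Fintype.ofFinite _
  have hcard : Fintype.card (AdjoinRoot P) = 2 ^ 2 ^ r := by
    rw [← Nat.card_eq_fintype_card, Module.natCard_eq_pow_finrank (K := ZMod 2), pb.finrank,
      AdjoinRoot.powerBasis_dim, hdeg, Nat.card_zmod]
  have hroot : AdjoinRoot.root P ^ (2 ^ r + 1) = 1 := by
    have h1 := congrArg (aeval (AdjoinRoot.root P)) (geomPoly_mul (2 ^ r + 1))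
    rw [map_mul, ← hP, AdjoinRoot.aeval_eq, AdjoinRoot.mk_self, zero_mul] at h1
    simp only [map_add, map_one, map_pow, aeval_X] at h1
    have h2 : (2 : AdjoinRoot P) = 0 := by
      have := congrArg (AdjoinRoot.mk P) two_eq_zero
      simpa only [map_ofNat, map_zero] using this
    linear_combination -h1 - h2
  have hroot' : AdjoinRoot.root P ^ 2 ^ (2 * r) = AdjoinRoot.root P := by
    have hexp : 2 ^ (2 * r) = (2 ^ r + 1) * (2 ^ r - 1) + 1 := by
      obtain ⟨k, hk⟩ : ∃ k, 2 ^ r = k + 1 := Nat.exists_eq_add_of_le' Nat.one_le_two_pow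
      rw [mul_comm 2 r, pow_mul, hk]
      simp only [Nat.add_sub_cancel]
      ring
    rw [hexp, pow_succ, pow_mul, hroot, one_pow, one_mul]
  have hfrob : ∀ (Q : (ZMod 2)[X]) (k : ℕ) (β : AdjoinRoot P),
      aeval β Q ^ 2 ^ k = aeval (β ^ 2 ^ k) Q := by
    intro Q k
    induction k with
    | zero => simp
    | succ k ih =>
      intro β
      rw [pow_succ, pow_mul, ih, pow_mul, ← map_pow, ← ZMod.expand_card, expand_aeval]
  have hfix : ∀ y : AdjoinRoot P, y ^ 2 ^ (2 * r) = y := by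
    intro y
    induction y using AdjoinRoot.induction_on with
    | ih Q => rw [← AdjoinRoot.aeval_eq, hfrob, hroot']
  by_contra hr
  have hne : (X ^ 2 ^ (2 * r) - X : (AdjoinRoot P)[X]) ≠ 0 :=
    FiniteField.X_pow_card_pow_sub_X_ne_zero _ (by omega) (by norm_num)
  have hle : Fintype.card (AdjoinRoot P) ≤ 2 ^ (2 * r) := by
    have hsub : (Finset.univ : Finset (AdjoinRoot P)) ⊆
        (X ^ 2 ^ (2 * r) - X : (AdjoinRoot P)[X]).roots.toFinset := by
      intro y _
      rw [Multiset.mem_toFinset, mem_roots hne]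
      simp [hfix y]
    calc Fintype.card (AdjoinRoot P) ≤ _ := Finset.card_le_card hsub
      _ ≤ _ := Multiset.toFinset_card_le _
      _ ≤ _ := card_roots' _
      _ = 2 ^ (2 * r) := FiniteField.X_pow_card_sub_X_natDegree_eq _
          (Nat.one_lt_two_pow (by omega))
  rw [hcard] at hle
  have hle' : 2 ^ r ≤ 2 * r := (Nat.pow_le_pow_iff_right (by norm_num)).1 hle
  obtain ⟨k, rfl⟩ : ∃ k, r = k + 3 := Nat.exists_eq_add_of_le' (by omega)
  have hk : k < 2 ^ k := Nat.lt_two_pow_self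
  rw [pow_add] at hle'
  omega

/-! ### Solving the equation with three primes -/

/-- Only `1 + x ^ a` is divisible by `P`. -/
lemma solve_one_sided {P : (ZMod 2)[X]} (hP : NonlinearPrime P) {e m f g : ℕ} (hm : Odd m)
    (hmP : geomPoly m = P) (h1P : SupportedOn P (1 + P))
    (hE : BalancedAt P (2 ^ e * m) (2 ^ f) (2 ^ g)) :
    ∃ n, X ^ (2 ^ e * m) * (X + 1) ^ 2 ^ f * P ^ 2 ^ g =
          (X ^ 3 * (X + 1) ^ 2 * (X ^ 2 + X + 1)) ^ 2 ^ n ∨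
        X ^ (2 ^ e * m) * (X + 1) ^ 2 ^ f * P ^ 2 ^ g =
          (X ^ 5 * (X + 1) ^ 4 * (X ^ 4 + X ^ 3 + X ^ 2 + X + 1)) ^ 2 ^ n := by
  obtain ⟨r, hr0, rfl, h1⟩ := one_add_geomPoly hP hm hmP h1P
  have hr2 : r ≤ 2 := le_two_of_irreducible (hmP ▸ hP.1)
  have hX : 1 + X ^ (2 ^ e * (2 ^ r + 1)) = (P * (X + 1)) ^ 2 ^ e := by
    rw [mul_comm (2 ^ e), pow_mul, one_add_pow_two_pow, ← geomPoly_mul, hmP]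
  have hY : (1 + (X + 1) ^ 2 ^ f : (ZMod 2)[X]) = X ^ 2 ^ f := by
    rw [one_add_pow_two_pow]
    congr 1
    linear_combination two_eq_zero
  have hZ : 1 + P ^ 2 ^ g = (X * (X + 1) ^ (2 ^ r - 1)) ^ 2 ^ g := by
    rw [one_add_pow_two_pow, h1]
  have hE' : X ^ (2 ^ f + 2 ^ g) * (X + 1) ^ (2 ^ e + (2 ^ r - 1) * 2 ^ g) * P ^ 2 ^ e =
      X ^ (2 ^ e * (2 ^ r + 1)) * (X + 1) ^ 2 ^ f * P ^ 2 ^ g := by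
    unfold BalancedAt at hE
    rw [← hE, hX, hY, hZ, mul_pow, mul_pow, ← pow_mul, pow_add, pow_add]
    ring
  obtain ⟨ha, -, hc⟩ := hP.exponents_inj hE'
  rw [← hc] at ha ⊢
  have hf : 2 ^ f = 2 ^ e * 2 ^ r := by rw [mul_add, mul_one] at ha; omega
  rw [hf]
  refine ⟨e, ?_⟩
  have hr : r = 1 ∨ r = 2 := by omega
  rcases hr with rfl | rfl
  · left
    have : P = X ^ 2 + X + 1 := by
      rw [← hmP]; simp [geomPoly, Finset.sum_range_succ]; ring
    rw [this, mul_pow, mul_pow, ← pow_mul, ← pow_mul]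
    ring_nf
  · right
    have : P = X ^ 4 + X ^ 3 + X ^ 2 + X + 1 := by
      rw [← hmP]; simp [geomPoly, Finset.sum_range_succ]; ring
    rw [this, mul_pow, mul_pow, ← pow_mul, ← pow_mul]
    ring_nf

/-- Both `1 + x ^ a` and `1 + (x + 1) ^ b` are divisible by `P`. -/
lemma solve_two_sided {P : (ZMod 2)[X]} (hP : NonlinearPrime P) {e m f k g : ℕ} (hm : Odd m)
    (hk : Odd k) (hmP : geomPoly m = P) (hkP : geomPoly k = P.comp (X + 1))
    (h1P : SupportedOn P (1 + P)) (h1P' : SupportedOn (P.comp (X + 1)) (1 + P.comp (X + 1)))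
    (hE : BalancedAt P (2 ^ e * m) (2 ^ f * k) (2 ^ g)) :
    ∃ n, X ^ (2 ^ e * m) * (X + 1) ^ (2 ^ f * k) * P ^ 2 ^ g =
          (X ^ 3 * (X + 1) ^ 3 * (X ^ 2 + X + 1) ^ 2) ^ 2 ^ n := by
  obtain ⟨r, hr0, rfl, h1⟩ := one_add_geomPoly hP hm hmP h1P
  obtain ⟨s, hs0, rfl, h2⟩ := one_add_geomPoly hP.comp hk hkP h1P'
  have h2' : 1 + P = (X + 1) * X ^ (2 ^ s - 1) := by
    have h3 := congrArg (fun f => f.comp (X + 1)) h2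
    simp only [add_comp, mul_comp, pow_comp, one_comp, X_comp, comp_comp_X_add_one] at h3
    have h4 : (X + 1 + 1 : (ZMod 2)[X]) = X := by linear_combination two_eq_zero
    rwa [h4] at h3
  have h12 : X ^ 1 * (X + 1) ^ (2 ^ r - 1) * P ^ 0 = X ^ (2 ^ s - 1) * (X + 1) ^ 1 * P ^ 0 := by
    linear_combination h2' - h1
  obtain ⟨hs, hr, -⟩ := hP.exponents_inj h12
  have hs : 2 ^ s = 2 := by omega
  have hr : 2 ^ r = 2 := by omega
  rw [hr] at hE h1 hmP ⊢
  rw [hs] at hE hkP ⊢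
  have hX : 1 + X ^ (2 ^ e * (2 + 1)) = (P * (X + 1)) ^ 2 ^ e := by
    rw [mul_comm (2 ^ e), pow_mul, one_add_pow_two_pow, ← geomPoly_mul, hmP]
  have hY : 1 + (X + 1) ^ (2 ^ f * (2 + 1)) = (P * X) ^ 2 ^ f := by
    rw [mul_comm (2 ^ f), pow_mul, one_add_pow_two_pow]
    congr 1
    have h3 := congrArg (fun f => f.comp (X + 1)) (geomPoly_mul (2 + 1))
    simp only [hkP, mul_comp, comp_comp_X_add_one, add_comp, pow_comp, one_comp, X_comp] at h3
    linear_combination -h3 + P * two_eq_zero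
  have hZ : 1 + P ^ 2 ^ g = (X * (X + 1)) ^ 2 ^ g := by
    rw [one_add_pow_two_pow, h1]; simp
  have hE' : X ^ (2 ^ f + 2 ^ g) * (X + 1) ^ (2 ^ e + 2 ^ g) * P ^ (2 ^ e + 2 ^ f) =
      X ^ (2 ^ e * (2 + 1)) * (X + 1) ^ (2 ^ f * (2 + 1)) * P ^ 2 ^ g := by
    unfold BalancedAt at hE
    rw [← hE, hX, hY, hZ, mul_pow, mul_pow, mul_pow]
    ring
  obtain ⟨ha, hb, hc⟩ := hP.exponents_inj hE'
  have hf : 2 ^ f = 2 ^ e := by omega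
  have hPeq : P = X ^ 2 + X + 1 := by
    rw [← hmP]; simp [geomPoly, Finset.sum_range_succ]; ring
  refine ⟨e, ?_⟩
  rw [← hc, hf, hPeq, mul_pow, mul_pow, ← pow_mul, ← pow_mul, ← pow_mul]
  ring_nf

lemma solve_three {P : (ZMod 2)[X]} (hP : NonlinearPrime P) {a b c : ℕ} (ha : a ≠ 0) (hb : b ≠ 0)
    (hc : c ≠ 0) (hE : BalancedAt P a b c) :
    ∃ n : ℕ, ∃ B ∈ ({X * (X + 1),
          X ^ 3 * (X + 1) ^ 2 * (X ^ 2 + X + 1),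
          X ^ 5 * (X + 1) ^ 4 * (X ^ 4 + X ^ 3 + X ^ 2 + X + 1),
          X ^ 3 * (X + 1) ^ 3 * (X ^ 2 + X + 1) ^ 2} : Set (Polynomial (ZMod 2))),
        X ^ a * (X + 1) ^ b * P ^ c = B ^ 2 ^ n ∨
          X ^ a * (X + 1) ^ b * P ^ c = (B.comp (X + 1)) ^ 2 ^ n := by
  have hE' := hE.comp
  have hP' := hP.comp
  have hsup : SupportedOn P ((1 + X ^ a) * (1 + (X + 1) ^ b) * (1 + P ^ c)) := by
    rw [hE]; exact supportedOn_prod hP a b c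
  have hsup' : SupportedOn (P.comp (X + 1))
      ((1 + X ^ b) * (1 + (X + 1) ^ a) * (1 + P.comp (X + 1) ^ c)) := by
    rw [hE']; exact supportedOn_prod hP' b a c
  obtain ⟨e, m, hm, rfl, hmP⟩ :=
    exponent_shape ha (hsup.of_dvd ((dvd_mul_right _ _).mul_right _))
  obtain ⟨f, k, hk, rfl, hkP⟩ :=
    exponent_shape hb (hsup'.of_dvd ((dvd_mul_right _ _).mul_right _))
  obtain ⟨g, rfl, h1P⟩ := exponent_shape' hP hc (hsup.of_dvd (dvd_mul_left _ _))
  obtain ⟨-, -, h1P'⟩ := exponent_shape' hP' hc (hsup'.of_dvd (dvd_mul_left _ _))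
  rcases hmP with rfl | hmP
  · rcases hkP with rfl | hkP
    · -- `P` would divide none of the three factors
      exfalso
      have hX : (1 + X ^ (2 ^ e * 1) : (ZMod 2)[X]) = (X + 1) ^ 2 ^ e := by
        rw [mul_one, one_add_pow_two_pow, add_comm]
      have hY : (1 + (X + 1) ^ (2 ^ f * 1) : (ZMod 2)[X]) = X ^ 2 ^ f := by
        rw [mul_one, one_add_pow_two_pow]
        congr 1
        linear_combination two_eq_zero
      have hd : P ∣ (1 + X ^ (2 ^ e * 1)) * (1 + (X + 1) ^ (2 ^ f * 1)) * (1 + P ^ 2 ^ g) := by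
        rw [hE]
        exact (dvd_pow_self P hc).mul_left _
      rw [hX, hY] at hd
      rcases hP.1.prime.dvd_or_dvd hd with hd | hd
      · rcases hP.1.prime.dvd_or_dvd hd with hd | hd
        · exact hP.2.2
            (eq_of_irreducible_dvd hP.1 irreducible_X_add_one (hP.1.prime.dvd_of_dvd_pow hd))
        · exact hP.2.1 (eq_of_irreducible_dvd hP.1 irreducible_X (hP.1.prime.dvd_of_dvd_pow hd))
      · exact hP.1.not_isUnit (isUnit_of_dvd_one ((dvd_add_left (dvd_pow_self P hc)).1 hd))
    · rw [mul_one] at hE' ⊢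
      obtain ⟨n, hn⟩ := solve_one_sided hP' hk hkP h1P' hE'
      have key : ∀ B : (ZMod 2)[X],
          X ^ (2 ^ f * k) * (X + 1) ^ 2 ^ e * P.comp (X + 1) ^ 2 ^ g = B ^ 2 ^ n →
          X ^ 2 ^ e * (X + 1) ^ (2 ^ f * k) * P ^ 2 ^ g = B.comp (X + 1) ^ 2 ^ n := by
        intro B hB
        have h3 := congrArg (fun f => f.comp (X + 1)) hB
        simp only [mul_comp, pow_comp, X_comp, comp_comp_X_add_one, X_add_one_comp] at h3
        rw [← h3]; ring
      rcases hn with hn | hn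
      · exact ⟨n, _, by simp, Or.inr (key _ hn)⟩
      · exact ⟨n, _, by simp, Or.inr (key _ hn)⟩
  · rcases hkP with rfl | hkP
    · rw [mul_one] at hE ⊢
      obtain ⟨n, hn | hn⟩ := solve_one_sided hP hm hmP h1P hE
      · exact ⟨n, _, by simp, Or.inl hn⟩
      · exact ⟨n, _, by simp, Or.inl hn⟩
    · obtain ⟨n, hn⟩ := solve_two_sided hP hm hk hmP hkP h1P h1P' hE
      exact ⟨n, _, by simp, Or.inl hn⟩

/-! ### Two primes -/

lemma nonlinearPrime_quadratic : NonlinearPrime (X ^ 2 + X + 1) := by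
  have hdeg : (X ^ 2 + X + 1 : (ZMod 2)[X]).natDegree = 2 := by compute_degree!
  have h0 : ∀ r : ZMod 2, r ^ 2 + r + 1 ≠ 0 := by decide
  refine ⟨?_, fun h => ?_, fun h => ?_⟩
  · refine (irreducible_iff_roots_eq_zero_of_degree_le_three (by omega) (by omega)).2 ?_
    refine Multiset.eq_zero_of_forall_notMem fun r hr => h0 r ?_
    simpa using (mem_roots'.1 hr).2
  · rw [h, natDegree_X] at hdeg
    omega
  · have h1 := congrArg (eval 1) h
    simp only [eval_add, eval_pow, eval_X, eval_one] at h1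
    revert h1; decide

lemma solve_two {a b : ℕ} (ha : a ≠ 0) (hb : b ≠ 0)
    (hE : (1 + X ^ a) * (1 + (X + 1) ^ b) = (X ^ a * (X + 1) ^ b : (ZMod 2)[X])) :
    ∃ n, (X ^ a * (X + 1) ^ b : (ZMod 2)[X]) = (X * (X + 1)) ^ 2 ^ n := by
  -- With no third prime at hand, `SupportedOn 0` allows the factors `x` and `x + 1` only.
  have hpow : ∀ {a b : ℕ}, a ≠ 0 →
      (1 + X ^ a) * (1 + (X + 1) ^ b) = (X ^ a * (X + 1) ^ b : (ZMod 2)[X]) →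
      ∃ e, a = 2 ^ e := by
    intro a b ha hE
    have hsup : SupportedOn 0 (1 + X ^ a) := by
      intro Q hQ hd
      have hd' : Q ∣ X ^ a * (X + 1) ^ b := hE ▸ hd.mul_right _
      rcases hQ.prime.dvd_or_dvd hd' with h | h
      · exact Or.inl (eq_of_irreducible_dvd hQ irreducible_X (hQ.prime.dvd_of_dvd_pow h))
      · exact Or.inr (Or.inl
          (eq_of_irreducible_dvd hQ irreducible_X_add_one (hQ.prime.dvd_of_dvd_pow h)))
    obtain ⟨e, m, hm, rfl, rfl | hm0⟩ := exponent_shape ha hsup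
    · exact ⟨e, mul_one _⟩
    · have : m = 0 := geomPoly_inj (hm0.trans (by simp [geomPoly]))
      subst this
      exact absurd hm (by decide)
  have hE' : (1 + X ^ b) * (1 + (X + 1) ^ a) = (X ^ b * (X + 1) ^ a : (ZMod 2)[X]) := by
    have h3 := congrArg (fun f => f.comp (X + 1)) hE
    simp only [mul_comp, add_comp, pow_comp, one_comp, X_comp] at h3
    have h4 : (X + 1 + 1 : (ZMod 2)[X]) = X := by linear_combination two_eq_zero
    rw [h4] at h3
    linear_combination h3
  obtain ⟨e, rfl⟩ := hpow ha hE
  obtain ⟨f, rfl⟩ := hpow hb hE'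
  rw [one_add_pow_two_pow, one_add_pow_two_pow] at hE
  have h2 : (1 + (X + 1) : (ZMod 2)[X]) = X := by linear_combination two_eq_zero
  rw [h2] at hE
  have hE2 : X ^ 2 ^ f * (X + 1) ^ 2 ^ e * (X ^ 2 + X + 1) ^ 0 =
      (X ^ 2 ^ e * (X + 1) ^ 2 ^ f * (X ^ 2 + X + 1) ^ 0 : (ZMod 2)[X]) := by
    linear_combination hE
  obtain ⟨h, -, -⟩ := nonlinearPrime_quadratic.exponents_inj hE2
  exact ⟨e, by rw [h, mul_pow]⟩

/-! ### The listed polynomials are unitary perfect -/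

lemma nonlinearPrime_quartic : NonlinearPrime (X ^ 4 + X ^ 3 + X ^ 2 + X + 1) := by
  obtain ⟨F, hF⟩ : ∃ F : (ZMod 2)[X], F = X ^ 4 + X ^ 3 + X ^ 2 + X + 1 := ⟨_, rfl⟩
  have hdeg : F.natDegree = 4 := by rw [hF]; compute_degree!
  have hroot : ∀ r : ZMod 2, F.eval r ≠ 0 := by
    have h0 : ∀ r : ZMod 2, r ^ 4 + r ^ 3 + r ^ 2 + r + 1 ≠ 0 := by decide
    intro r
    simpa [hF] using h0 r
  rw [← hF]
  have hF0 : F ≠ 0 := by rintro h; simp [h] at hdeg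
  refine ⟨?_, fun h => ?_, fun h => ?_⟩
  · refine (Monic.irreducible_iff_lt_natDegree_lt (monic_of_ne_zero hF0) ?_).2 ?_
    · rintro h; simp [h] at hdeg
    intro q hq hqd hdvd
    rw [hdeg, Finset.mem_Ioc] at hqd
    -- A nontrivial factor of degree at most two is `x ^ 2 + x + 1`, since `F` has no root.
    have hqroot : ∀ r : ZMod 2, q.eval r ≠ 0 := fun r hr =>
      hroot r (eval_eq_zero_of_dvd_of_eval_eq_zero hdvd hr)
    have hqe : q = C (q.coeff 2) * X ^ 2 + C (q.coeff 1) * X + C (q.coeff 0) :=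
      eq_quadratic_of_degree_le_two (natDegree_le_iff_degree_le.1 hqd.2)
    have hz : ∀ u v w : ZMod 2, w ≠ 0 → u + v + w ≠ 0 →
        (u = 0 ∧ v = 0) ∨ (u = 1 ∧ v = 1 ∧ w = 1) := by decide
    have h0 := hqroot 0
    have h1 := hqroot 1
    rw [hqe] at h0 h1
    simp only [eval_add, eval_mul, eval_C, eval_pow, eval_X] at h0 h1
    rcases hz _ _ _ (by simpa using h0) (by simpa using h1) with ⟨hu, hv⟩ | ⟨hu, hv, hw⟩
    · rw [hu, hv] at hqe
      have : q.natDegree = 0 := by rw [hqe]; simp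
      omega
    · rw [hu, hv, hw] at hqe
      simp only [C_1, one_mul] at hqe
      have h2 : q ∣ X + 1 := by
        refine (dvd_add_right (dvd_mul_right q (X ^ 2))).1 (?_ : q ∣ q * X ^ 2 + (X + 1))
        have : q * X ^ 2 + (X + 1) = F := by rw [hqe, hF]; ring
        rwa [this]
      have h3 : q = X + 1 :=
        eq_of_irreducible_dvd (hqe ▸ nonlinearPrime_quadratic.1) irreducible_X_add_one h2
      exact hqroot 1 (X_add_one_dvd_iff.1 (h3 ▸ dvd_rfl))
  · rw [h, natDegree_X] at hdeg
    omega
  · exact hroot 1 (X_add_one_dvd_iff.1 (h ▸ dvd_rfl))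

/-- Factorization over `𝔽₂`, where every nonzero polynomial is monic. -/
lemma eq_prod_normalizedFactors {A : (ZMod 2)[X]} (hA : A ≠ 0) :
    (∀ P, P ∈ (UniqueFactorizationMonoid.normalizedFactors A).toFinset ↔ Irreducible P ∧ P ∣ A) ∧
    (∀ P ∈ (UniqueFactorizationMonoid.normalizedFactors A).toFinset,
      (UniqueFactorizationMonoid.normalizedFactors A).count P ≠ 0) ∧
    ∏ P ∈ (UniqueFactorizationMonoid.normalizedFactors A).toFinset,
      P ^ (UniqueFactorizationMonoid.normalizedFactors A).count P = A := by
  refine ⟨fun P => ?_, fun P hP => ?_, ?_⟩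
  · rw [Multiset.mem_toFinset, UniqueFactorizationMonoid.mem_normalizedFactors_iff hA,
      irreducible_iff_prime]
  · exact Multiset.count_ne_zero.2 (Multiset.mem_toFinset.1 hP)
  · rw [← Finset.prod_multiset_count]
    exact associated_iff_eq.1 (UniqueFactorizationMonoid.prod_normalizedFactors hA)

lemma unitaryDivisors_finite {A : (ZMod 2)[X]} (hA : A ≠ 0) : (unitaryDivisors A).Finite := by
  obtain ⟨h1, h2, h3⟩ := eq_prod_normalizedFactors hA
  rw [← h3]
  exact (sigmaStar_prod _ _ fun P hP => ⟨((h1 P).1 hP).1, h2 P hP⟩).1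

lemma sigmaStar_two {a b : ℕ} (ha : a ≠ 0) (hb : b ≠ 0) :
    sigmaStar (X ^ a * (X + 1) ^ b) = (1 + X ^ a) * (1 + (X + 1) ^ b) := by
  have hY := irreducible_X_add_one
  have h1 : sigmaStar ((X + 1) ^ b) = 1 + (X + 1) ^ b := by
    have := sigmaStar_mul hY one_ne_zero (fun h => hY.not_isUnit (isUnit_of_dvd_one h)) hb
      (unitaryDivisors_finite one_ne_zero)
    rwa [mul_one, sigmaStar_one, mul_one] at this
  rw [sigmaStar_mul irreducible_X (pow_ne_zero _ hY.ne_zero) ?_ ha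
    (unitaryDivisors_finite (pow_ne_zero _ hY.ne_zero)), h1]
  rw [X_dvd_iff, coeff_zero_eq_eval_zero]
  simp

lemma sigmaStar_three {P : (ZMod 2)[X]} (hP : NonlinearPrime P) {a b c : ℕ} (ha : a ≠ 0)
    (hb : b ≠ 0) (hc : c ≠ 0) :
    sigmaStar (X ^ a * (X + 1) ^ b * P ^ c) =
      (1 + X ^ a) * (1 + (X + 1) ^ b) * (1 + P ^ c) := by
  have hne : (X ^ a * (X + 1) ^ b : (ZMod 2)[X]) ≠ 0 :=
    mul_ne_zero (pow_ne_zero _ X_ne_zero) (pow_ne_zero _ irreducible_X_add_one.ne_zero)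
  rw [mul_comm, sigmaStar_mul hP.1 hne ?_ hc (unitaryDivisors_finite hne), sigmaStar_two ha hb,
    mul_comm]
  intro hd
  rcases hP.1.prime.dvd_or_dvd hd with hd | hd
  · exact hP.2.1 (eq_of_irreducible_dvd hP.1 irreducible_X (hP.1.prime.dvd_of_dvd_pow hd))
  · exact hP.2.2 (eq_of_irreducible_dvd hP.1 irreducible_X_add_one (hP.1.prime.dvd_of_dvd_pow hd))

lemma BalancedAt.unitaryPerfect {P : (ZMod 2)[X]} {a b c : ℕ} (h : BalancedAt P a b c)
    (hP : NonlinearPrime P) (ha : a ≠ 0) (hb : b ≠ 0) (hc : c ≠ 0) (n : ℕ) :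
    UnitaryPerfect ((X ^ a * (X + 1) ^ b * P ^ c) ^ 2 ^ n) := by
  have h2 : 2 ^ n ≠ 0 := by positivity
  unfold UnitaryPerfect
  rw [mul_pow, mul_pow, ← pow_mul, ← pow_mul, ← pow_mul, sigmaStar_three hP (mul_ne_zero ha h2)
    (mul_ne_zero hb h2) (mul_ne_zero hc h2)]
  simp only [pow_mul, one_add_pow_two_pow]
  rw [← mul_pow, ← mul_pow, h, mul_pow, mul_pow]

lemma BalancedAt.unitaryPerfect_or_comp {P A : (ZMod 2)[X]} {a b c : ℕ} (h : BalancedAt P a b c)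
    (hP : NonlinearPrime P) (ha : a ≠ 0) (hb : b ≠ 0) (hc : c ≠ 0) (n : ℕ)
    (hA : A = (X ^ a * (X + 1) ^ b * P ^ c) ^ 2 ^ n ∨
      A = ((X ^ a * (X + 1) ^ b * P ^ c).comp (X + 1)) ^ 2 ^ n) :
    UnitaryPerfect A := by
  rcases hA with rfl | rfl
  · exact h.unitaryPerfect hP ha hb hc n
  · have h3 : (X ^ a * (X + 1) ^ b * P ^ c).comp (X + 1) =
        X ^ b * (X + 1) ^ a * P.comp (X + 1) ^ c := by
      simp only [mul_comp, pow_comp, X_comp, X_add_one_comp]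
      ring
    rw [h3]
    exact h.comp.unitaryPerfect hP.comp hb ha hc n

lemma unitaryPerfect_two (n : ℕ) : UnitaryPerfect ((X * (X + 1)) ^ 2 ^ n) := by
  have h2 : 2 ^ n ≠ 0 := by positivity
  unfold UnitaryPerfect
  rw [mul_pow, sigmaStar_two h2 h2, one_add_pow_two_pow, one_add_pow_two_pow, ← mul_pow, ← mul_pow]
  congr 1
  linear_combination (1 + X) * two_eq_zero

/-! ### The classification -/

/-- If `A = ∏ (1 + Pᵢ ^ nᵢ)` over the primes `Pᵢ` of `A`, then `x` and `x + 1` are among them: a prime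
`Q ≠ x` has `Q(0) = 1`, so `x` divides `1 + Q ^ n`, and `x + 1` divides `1 + x ^ n`. -/
lemma unitaryPerfect_primes {A : (ZMod 2)[X]} (hA : A ≠ 0) (hA1 : A ≠ 1) {s : Finset (ZMod 2)[X]}
    {n : (ZMod 2)[X] → ℕ} (hs : ∀ P, P ∈ s ↔ Irreducible P ∧ P ∣ A)
    (hsum : ∏ P ∈ s, (1 + P ^ n P) = A) : X ∈ s ∧ X + 1 ∈ s := by
  have hdvd : ∀ Q ∈ s, 1 + Q ^ n Q ∣ A := fun Q hQ =>
    hsum ▸ Finset.dvd_prod_of_mem (fun P => 1 + P ^ n P) hQ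
  have hX : X ∈ s := by
    obtain ⟨Q, hQ, hQA⟩ := WfDvdMonoid.exists_irreducible_factor
      (fun hu => hA1 (isUnit_iff_eq_one.1 hu)) hA
    have hQs : Q ∈ s := (hs Q).2 ⟨hQ, hQA⟩
    by_cases hQX : X ∣ Q
    · exact eq_of_irreducible_dvd irreducible_X hQ hQX ▸ hQs
    · refine (hs X).2 ⟨irreducible_X, dvd_trans ?_ (hdvd Q hQs)⟩
      rw [X_dvd_iff, coeff_zero_eq_eval_zero] at hQX ⊢
      have key : ∀ r : ZMod 2, r ≠ 0 → r = 1 := by decide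
      rw [eval_add, eval_pow, key _ hQX, one_pow, eval_one]
      rfl
  refine ⟨hX, (hs _).2 ⟨irreducible_X_add_one, dvd_trans ?_ (hdvd X hX)⟩⟩
  rw [X_add_one_dvd_iff, eval_add, eval_pow, eval_X, one_pow, eval_one]
  rfl

theorem stmt0 (A : Polynomial (ZMod 2)) (hM : A.Monic) (hnc : A.natDegree ≠ 0)
    (hw : omega A ≤ 3) :
    UnitaryPerfect A ↔
      ∃ n : ℕ, ∃ B ∈ ({X * (X + 1),
          X ^ 3 * (X + 1) ^ 2 * (X ^ 2 + X + 1),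
          X ^ 5 * (X + 1) ^ 4 * (X ^ 4 + X ^ 3 + X ^ 2 + X + 1),
          X ^ 3 * (X + 1) ^ 3 * (X ^ 2 + X + 1) ^ 2} : Set (Polynomial (ZMod 2))),
        A = B ^ 2 ^ n ∨ A = (B.comp (X + 1)) ^ 2 ^ n := by
  constructor
  · intro hA
    obtain ⟨hs, hn, hprod⟩ := eq_prod_normalizedFactors hM.ne_zero
    unfold omega at hw
    generalize (UniqueFactorizationMonoid.normalizedFactors A).toFinset = s at *
    generalize hcount : (fun P => (UniqueFactorizationMonoid.normalizedFactors A).count P) = n at *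
    have hc : ∀ P, (UniqueFactorizationMonoid.normalizedFactors A).count P = n P :=
      fun P => congrFun hcount P
    simp only [hc] at hn hprod
    have hsum : ∏ P ∈ s, (1 + P ^ n P) = A := by
      rw [← (sigmaStar_prod s n fun P hP => ⟨((hs P).1 hP).1, hn P hP⟩).2, hprod]
      exact hA
    obtain ⟨hX, hY⟩ := unitaryPerfect_primes hM.ne_zero (by rintro rfl; simp at hnc) hs hsum
    have hXY : (X + 1 : (ZMod 2)[X]) ≠ X := by simp
    have hY' : X + 1 ∈ s.erase X := Finset.mem_erase.2 ⟨hXY, hY⟩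
    obtain ⟨t, ht⟩ : ∃ t, t = (s.erase X).erase (X + 1) := ⟨_, rfl⟩
    have hcard : t.card ≤ 1 := by
      rw [ht, Finset.card_erase_of_mem hY', Finset.card_erase_of_mem hX]
      omega
    rw [← Finset.mul_prod_erase s _ hX, ← Finset.mul_prod_erase _ _ hY', ← ht] at hprod hsum
    have hcard' : t.card = 0 ∨ t.card = 1 := by omega
    rcases hcard' with h0 | h1
    · rw [Finset.card_eq_zero] at h0
      rw [h0, Finset.prod_empty, mul_one] at hprod hsum
      obtain ⟨k, hk⟩ := solve_two (hn _ hX) (hn _ hY) (hsum.trans hprod.symm)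
      exact ⟨k, _, by simp, Or.inl (hprod.symm.trans hk)⟩
    · obtain ⟨P, hPt⟩ := Finset.card_eq_one.1 h1
      rw [hPt, Finset.prod_singleton, ← mul_assoc] at hprod hsum
      have hP : P ∈ (s.erase X).erase (X + 1) := by rw [← ht, hPt]; simp
      simp only [Finset.mem_erase] at hP
      have := solve_three ⟨((hs P).1 hP.2.2).1, hP.2.1, hP.1⟩ (hn _ hX) (hn _ hY)
        (hn _ hP.2.2) (hsum.trans hprod.symm)
      rwa [hprod] at this
  · rintro ⟨n, B, hB, hA⟩
    simp only [Set.mem_insert_iff, Set.mem_singleton_iff] at hB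
    rcases hB with rfl | rfl | rfl | rfl
    · have : (X * (X + 1) : (ZMod 2)[X]).comp (X + 1) = X * (X + 1) := by
        rw [mul_comp, X_add_one_comp, X_comp, mul_comm]
      rw [this, or_self] at hA
      exact hA ▸ unitaryPerfect_two n
    · have h : BalancedAt (X ^ 2 + X + 1) 3 2 1 := by
        unfold BalancedAt
        rw [← sub_eq_zero]
        ring_nf
        reduce_mod_char
      exact h.unitaryPerfect_or_comp nonlinearPrime_quadratic (by decide) (by decide) (by decide) n
        (by simpa only [pow_one] using hA)
    · have h : BalancedAt (X ^ 4 + X ^ 3 + X ^ 2 + X + 1) 5 4 1 := by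
        unfold BalancedAt
        rw [← sub_eq_zero]
        ring_nf
        reduce_mod_char
      exact h.unitaryPerfect_or_comp nonlinearPrime_quartic (by decide) (by decide) (by decide) n
        (by simpa only [pow_one] using hA)
    · have h : BalancedAt (X ^ 2 + X + 1) 3 3 2 := by
        unfold BalancedAt
        rw [← sub_eq_zero]
        ring_nf
        reduce_mod_char
      exact h.unitaryPerfect_or_comp nonlinearPrime_quadratic (by decide) (by decide) (by decide) n
        hA
end

section
/- If A is a unitary perfect polynomial over 𝔽₂, then for every n ∈ ℕ the polynomial A^(2^n) is also unitary perfect over 𝔽₂. -/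
/-!
Over `𝔽₂` the map `f ↦ f ^ 2 ^ n` is an injective ring endomorphism of the polynomial ring (an
iterated Frobenius).  If `d * e = A ^ 2 ^ n` with `d`, `e` coprime, then unique factorization, and
the fact that `1` is the only unit, force `d` and `e` to be `2 ^ n`-th powers.  Hence this
endomorphism maps the unitary divisors of `A` bijectively onto those of `A ^ 2 ^ n`
(`unitaryDivisors_pow`), and additivity gives `σ*(A ^ 2 ^ n) = σ*(A) ^ 2 ^ n`
(`sigmaStar_pow`), from which the theorem is immediate.
-/

open Polynomial
open scoped Classical

lemma monic_of_ne_zero_zmod_two {p : Polynomial (ZMod 2)} (hp : p ≠ 0) : p.Monic := by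
  have h : ∀ a : ZMod 2, a ≠ 0 → a = 1 := by decide
  exact h _ (leadingCoeff_ne_zero.mpr hp)

lemma eq_of_associated_zmod_two {p q : Polynomial (ZMod 2)} (h : Associated p q) : p = q := by
  by_cases hp : p = 0
  · subst hp
    exact ((associated_zero_iff_eq_zero q).mp h.symm).symm
  · exact eq_of_monic_of_associated (monic_of_ne_zero_zmod_two hp)
      (monic_of_ne_zero_zmod_two (h.ne_zero_iff.mp hp)) h

lemma pow_two_pow_injective (n : ℕ) :
    Function.Injective fun p : Polynomial (ZMod 2) => p ^ 2 ^ n := by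
  have h := iterateFrobenius_inj (Polynomial (ZMod 2)) 2 n
  intro p q hpq
  exact h (by simpa [iterateFrobenius_def] using hpq)

/-- The unitary divisors of `A ^ 2 ^ n` are exactly the `2 ^ n`-th powers of those of `A`.  This
includes `A = 0`, for which both sides are `{1}`. -/
lemma unitaryDivisors_pow (A : Polynomial (ZMod 2)) (n : ℕ) :
    {d : Polynomial (ZMod 2) | d.Monic ∧ d ∣ A ^ 2 ^ n ∧ IsCoprime d (A ^ 2 ^ n / d)} =
      (fun p => p ^ 2 ^ n) ''
        {d : Polynomial (ZMod 2) | d.Monic ∧ d ∣ A ∧ IsCoprime d (A / d)} := by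
  have hk : 0 < 2 ^ n := by positivity
  ext d
  constructor
  · rintro ⟨hm, hd, hc⟩
    have he : d * (A ^ 2 ^ n / d) = A ^ 2 ^ n := EuclideanDomain.mul_div_cancel' hm.ne_zero hd
    obtain ⟨c, hcd⟩ := exists_associated_pow_of_mul_eq_pow' hc he
    obtain ⟨f, hfe⟩ := exists_associated_pow_of_mul_eq_pow' hc.symm ((mul_comm _ _).trans he)
    have hcd := eq_of_associated_zmod_two hcd
    have hfe := eq_of_associated_zmod_two hfe
    have hA : c * f = A := pow_two_pow_injective n (by
      change (c * f) ^ 2 ^ n = A ^ 2 ^ n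
      rw [mul_pow, hcd, hfe, he])
    have hc0 : c ≠ 0 := by
      rintro rfl
      exact hm.ne_zero (by rw [← hcd, zero_pow hk.ne'])
    refine ⟨c, ⟨monic_of_ne_zero_zmod_two hc0, ⟨f, hA.symm⟩, ?_⟩, hcd⟩
    rw [← hA, mul_div_cancel_left₀ f hc0]
    rwa [← hfe, ← hcd, IsCoprime.pow_iff hk hk] at hc
  · rintro ⟨c, ⟨hm, ⟨f, rfl⟩, hc⟩, rfl⟩
    rw [mul_div_cancel_left₀ f hm.ne_zero] at hc
    refine ⟨hm.pow _, pow_dvd_pow_of_dvd (dvd_mul_right c f) _, ?_⟩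
    change IsCoprime (c ^ 2 ^ n) ((c * f) ^ 2 ^ n / c ^ 2 ^ n)
    rw [mul_pow, mul_div_cancel_left₀ _ (pow_ne_zero _ hm.ne_zero)]
    exact hc.pow

lemma sigmaStar_pow (A : Polynomial (ZMod 2)) (n : ℕ) :
    sigmaStar (A ^ 2 ^ n) = sigmaStar A ^ 2 ^ n := by
  let φ : Polynomial (ZMod 2) →+ Polynomial (ZMod 2) :=
    (iterateFrobenius (Polynomial (ZMod 2)) 2 n).toAddMonoidHom
  have hφ (p : Polynomial (ZMod 2)) : φ p = p ^ 2 ^ n := iterateFrobenius_def 2 n p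
  have hinj : Function.Injective φ := iterateFrobenius_inj (Polynomial (ZMod 2)) 2 n
  unfold sigmaStar
  rw [unitaryDivisors_pow, finsum_mem_image (pow_two_pow_injective n).injOn, ← hφ,
    -- Injectivity of `φ` makes the finiteness of the set of divisors unnecessary here.
    φ.map_finsum_of_injective hinj]
  refine finsum_congr fun d => ?_
  rw [φ.map_finsum_of_injective hinj]
  simp only [hφ]

theorem stmt7 (A : Polynomial (ZMod 2)) (hperf : UnitaryPerfect A) (n : ℕ) :
    UnitaryPerfect (A ^ 2 ^ n) := by
  unfold UnitaryPerfect at hperf ⊢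
  rw [sigmaStar_pow, hperf]
end

section
/- Every nonconstant unitary perfect polynomial over 𝔽₂ is divisible by both x and x+1. In particular, there is no odd unitary perfect polynomial over 𝔽₂. -/
/-!
The map `d ↦ A / d` is an involution on the unitary divisors of `A`, and it has no fixed point
when `A` is nonconstant: `d = A / d` would be coprime to itself, hence a unit, and so would
`A = d * d`. If `A` does not vanish at `c ∈ 𝔽₂`, then every divisor of `A` takes the value `1`
at `c`, so the values of `d` and `A / d` at `c` cancel and `σ*(A)` vanishes at `c`
(`eval_sigmaStar_eq_zero`). With `σ*(A) = A` this is a contradiction, so a nonconstant unitary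
perfect polynomial vanishes at both elements of `𝔽₂`.
-/

open Polynomial
open scoped Classical

lemma zmod_two_eq_one {a : ZMod 2} (h : a ≠ 0) : a = 1 := by
  revert a; decide

lemma eval_sigmaStar_eq_zero (A : Polynomial (ZMod 2)) (hnc : A.natDegree ≠ 0)
    (c : ZMod 2) (hc : A.eval c ≠ 0) : (sigmaStar A).eval c = 0 := by
  have hA : A ≠ 0 := by rintro rfl; simp at hnc
  unfold sigmaStar
  set s := {d : Polynomial (ZMod 2) | d.Monic ∧ d ∣ A ∧ IsCoprime d (A / d)} with hs
  by_cases hfin : (s ∩ Function.support fun d => d).Finite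
  · rw [finsum_mem_eq_sum _ hfin, eval_finsetSum]
    have hmem : ∀ d, d ∈ hfin.toFinset ↔ d.Monic ∧ d ∣ A ∧ IsCoprime d (A / d) := by
      intro d
      simp only [Set.Finite.mem_toFinset, Set.mem_inter_iff, Function.mem_support, hs,
        Set.mem_ofPred_eq]
      exact ⟨fun h => h.1, fun h => ⟨h, h.1.ne_zero⟩⟩
    have hmul : ∀ d, d ∈ hfin.toFinset → d * (A / d) = A := fun d hd =>
      EuclideanDomain.mul_div_cancel' ((hmem d).1 hd).1.ne_zero ((hmem d).1 hd).2.1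
    have hq0 : ∀ d, d ∈ hfin.toFinset → A / d ≠ 0 := fun d hd h => by
      have := hmul d hd
      rw [h, mul_zero] at this
      exact hA this.symm
    have hinv : ∀ d, d ∈ hfin.toFinset → A / (A / d) = d := fun d hd =>
      EuclideanDomain.div_eq_iff_eq_mul_of_dvd _ _ _ (hq0 d hd)
        (Dvd.intro_left _ (hmul d hd)) |>.2 (by rw [mul_comm, hmul d hd])
    have hone : ∀ d, d ∣ A → d.eval c = 1 := fun d hd =>
      zmod_two_eq_one fun h => hc (eval_eq_zero_of_dvd_of_eval_eq_zero hd h)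
    refine Finset.sum_involution (fun d _ => A / d) ?_ ?_ ?_ ?_
    · intro d hd
      rw [hone d (Dvd.intro _ (hmul d hd)), hone (A / d) (Dvd.intro_left _ (hmul d hd))]
      decide
    · intro d hd _ h
      have hcop := ((hmem d).1 hd).2.2
      have hm := hmul d hd
      rw [h] at hcop hm
      have hu := isCoprime_self.1 hcop
      exact hnc (natDegree_eq_zero_of_isUnit (hm ▸ hu.mul hu))
    · intro d hd
      rw [hmem, hinv d hd]
      exact ⟨zmod_two_eq_one (leadingCoeff_ne_zero.2 (hq0 d hd)),
        Dvd.intro_left _ (hmul d hd), ((hmem d).1 hd).2.2.symm⟩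
    · exact hinv
  -- An infinite support would make the `finsum` zero by convention.
  · rw [finsum_mem_eq_zero_of_infinite hfin, eval_zero]

theorem stmt8 (A : Polynomial (ZMod 2)) (hnc : A.natDegree ≠ 0)
    (hperf : UnitaryPerfect A) :
    (X ∣ A ∧ (X + 1) ∣ A) ∧ ¬ (¬ X ∣ A ∧ ¬ (X + 1) ∣ A) := by
  have hroot : ∀ c : ZMod 2, A.eval c = 0 := fun c => by
    by_contra h
    have h0 := eval_sigmaStar_eq_zero A hnc c h
    rw [hperf] at h0
    exact h h0
  have hX : X ∣ A := by simpa using dvd_iff_isRoot.2 (hroot 0)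
  have hX1 : (X + 1) ∣ A := by
    have h := dvd_iff_isRoot.2 (hroot 1)
    rwa [map_one, CharTwo.sub_eq_add] at h
  exact ⟨⟨hX, hX1⟩, fun h => h.1 hX⟩
end

section
/- Let r be a positive integer. The polynomial x^(2^r) + x^(2^r − 1) + 1 over 𝔽₂ is irreducible if and only if r ∈ {1, 2}. -/
/-!
A root `α` of the polynomial is nonzero, and its inverse `β` satisfies `β ^ q = β + 1` with
`q = 2 ^ r`. Applying the `q`-power Frobenius twice gives `β ^ (q ^ 2) = β`, so `α` lies in the
field with `2 ^ (2 * r)` elements. If the polynomial is irreducible, its degree `2 ^ r` therefore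
divides `2 * r`, which forces `r ≤ 2`. Conversely, `X ^ 2 + X + 1` has no root in `ZMod 2`, and
`X ^ 4 + X ^ 3 + 1` has no monic factor of degree `1` or `2`, because comparing coefficients
leaves finitely many cases over `ZMod 2`, all contradictory.
-/

open Polynomial

lemma natDegree_trinomial (r : ℕ) :
    (X ^ 2 ^ r + X ^ (2 ^ r - 1) + 1 : Polynomial (ZMod 2)).natDegree = 2 ^ r := by
  have h : 0 < 2 ^ r := by positivity
  have h1 : (X ^ (2 ^ r - 1) + 1 : Polynomial (ZMod 2)).natDegree < 2 ^ r := by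
    refine (natDegree_add_le _ _).trans_lt ?_
    simp
  rw [add_assoc, natDegree_add_eq_left_of_natDegree_lt] <;> simp [h1]

/-- The Frobenius computation on the inverse of a root, in any field of characteristic two. -/
lemma pow_eq_self_of_root {K : Type*} [Field K] [CharP K 2] {r : ℕ} (hr : 0 < r) {a : K}
    (h : a ^ 2 ^ r + a ^ (2 ^ r - 1) + 1 = 0) : a ^ 2 ^ (2 * r) = a := by
  have h2 : 1 < 2 ^ r := Nat.one_lt_two_pow hr.ne'
  have hq : 2 ^ r - 1 + 1 = 2 ^ r := by omega
  have ha : a ≠ 0 := by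
    rintro rfl
    rw [zero_pow (by omega), zero_pow (by omega)] at h
    simp at h
  have hb : a⁻¹ ^ 2 ^ r = a⁻¹ + 1 := by
    have hm : a ^ 2 ^ r = a ^ (2 ^ r - 1) * a := by rw [← pow_succ, hq]
    have hne : a ^ (2 ^ r - 1) ≠ 0 := pow_ne_zero _ ha
    rw [inv_pow]
    rw [hm] at h ⊢
    field_simp
    linear_combination h - CharTwo.two_eq_zero (R := K) * (a ^ (2 ^ r - 1) * (1 + a))
  have hbb : a⁻¹ ^ 2 ^ (2 * r) = a⁻¹ := by
    rw [two_mul, pow_add, pow_mul, hb, add_pow_char_pow, hb, one_pow, add_assoc,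
      CharTwo.add_self_eq_zero, add_zero]
  rwa [inv_pow, inv_inj] at hbb

/-- A factorization with a monic factor `q` of degree one or two is excluded by comparing the
coefficients of both sides, a finite system of equations over `ZMod 2`. -/
lemma quartic_irreducible : Irreducible (X ^ 4 + X ^ 3 + 1 : Polynomial (ZMod 2)) := by
  have hd : (X ^ 4 + X ^ 3 + 1 : Polynomial (ZMod 2)).natDegree = 4 := by compute_degree!
  have hm : (X ^ 4 + X ^ 3 + 1 : Polynomial (ZMod 2)).Monic := by monicity!
  have h1 : (X ^ 4 + X ^ 3 + 1 : Polynomial (ZMod 2)) ≠ 1 := by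
    intro h; rw [h] at hd; simp at hd
  rw [hm.irreducible_iff_lt_natDegree_lt h1, hd]
  rintro q hq hmem ⟨p, hp⟩
  rw [Finset.mem_Ioc] at hmem
  have hp0 : p ≠ 0 := by rintro rfl; rw [mul_zero] at hp; exact hm.ne_zero hp
  have hpd : q.natDegree + p.natDegree = 4 := by
    rw [← natDegree_mul hq.ne_zero hp0, ← hp, hd]
  have hq3 : ∀ n, 2 < n → q.coeff n = 0 := fun n hn =>
    coeff_eq_zero_of_natDegree_lt (by omega)
  have hp4 : ∀ n, 3 < n → p.coeff n = 0 := fun n hn =>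
    coeff_eq_zero_of_natDegree_lt (by omega)
  have hlead : q.coeff 1 = 1 ∧ q.coeff 2 = 0 ∨ q.coeff 2 = 1 := by
    have hl : q.coeff q.natDegree = 1 := hq
    rcases (by omega : q.natDegree = 1 ∨ q.natDegree = 2) with h | h
    · left
      exact ⟨by rwa [h] at hl, coeff_eq_zero_of_natDegree_lt (by omega)⟩
    · right
      rwa [h] at hl
  have e : ∀ n, (X ^ 4 + X ^ 3 + 1 : Polynomial (ZMod 2)).coeff n = (q * p).coeff n :=
    fun n => by rw [hp]
  have e0 := e 0
  have e1 := e 1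
  have e2 := e 2
  have e3 := e 3
  have e4 := e 4
  have e5 := e 5
  simp [coeff_mul, Finset.Nat.antidiagonal_succ, coeff_X_pow, coeff_one, hq3, hp4]
    at e0 e1 e2 e3 e4 e5
  clear e hq3 hp4
  generalize q.coeff 0 = a0 at *
  generalize q.coeff 1 = a1 at *
  generalize q.coeff 2 = a2 at *
  generalize p.coeff 0 = b0 at *
  generalize p.coeff 1 = b1 at *
  generalize p.coeff 2 = b2 at *
  generalize p.coeff 3 = b3 at *
  clear hp hpd
  revert a0 a1 a2 b0 b1 b2 b3
  decide

lemma quadratic_irreducible : Irreducible (X ^ 2 + X + 1 : Polynomial (ZMod 2)) := by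
  have hd : (X ^ 2 + X + 1 : Polynomial (ZMod 2)).natDegree = 2 := by compute_degree!
  refine irreducible_of_degree_le_three_of_not_isRoot (by rw [hd]; decide) fun x => ?_
  simp only [IsRoot.def, eval_add, eval_pow, eval_X, eval_one]
  revert x
  decide

theorem stmt10 (r : ℕ) (hr : 0 < r) :
    Irreducible (X ^ 2 ^ r + X ^ (2 ^ r - 1) + 1 : Polynomial (ZMod 2)) ↔
      r = 1 ∨ r = 2 := by
  constructor
  · intro hi
    -- the residue class of `X` in `AdjoinRoot` is a root, so it is fixed by `a ↦ a ^ 2 ^ (2 * r)`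
    have hdvd : (X ^ 2 ^ r + X ^ (2 ^ r - 1) + 1 : Polynomial (ZMod 2)) ∣
        X ^ (Nat.card (ZMod 2)) ^ (2 * r) - X := by
      have : Fact (Irreducible (X ^ 2 ^ r + X ^ (2 ^ r - 1) + 1 : Polynomial (ZMod 2))) := ⟨hi⟩
      have : CharP (AdjoinRoot (X ^ 2 ^ r + X ^ (2 ^ r - 1) + 1 : Polynomial (ZMod 2))) 2 :=
        charP_of_injective_algebraMap (algebraMap (ZMod 2) _).injective 2
      have hroot := AdjoinRoot.eval₂_root (X ^ 2 ^ r + X ^ (2 ^ r - 1) + 1 : Polynomial (ZMod 2))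
      simp only [eval₂_add, eval₂_pow, eval₂_X, eval₂_one] at hroot
      rw [← AdjoinRoot.mk_eq_zero]
      simp only [map_sub, map_pow, AdjoinRoot.mk_X, Nat.card_zmod]
      rw [pow_eq_self_of_root hr hroot, sub_self]
    have h := hi.natDegree_dvd_of_dvd_X_pow_card_pow_sub_X hdvd
    rw [natDegree_trinomial] at h
    have hle := Nat.le_of_dvd (by omega) h
    by_contra hcon
    have h3 : 3 ≤ r := by omega
    have : ∀ n, 3 ≤ n → 2 * n < 2 ^ n := fun n hn => by
      induction n, hn using Nat.le_induction with
      | base => norm_num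
      | succ n hn ih => rw [pow_succ]; omega
    have := this r h3
    omega
  · rintro (rfl | rfl)
    · simpa using quadratic_irreducible
    · simpa using quartic_irreducible
end

section
/- Let l ∈ ℕ. The polynomial Q(x) = 1 + x⁵ + (x⁵)² + ⋯ + (x⁵)^l over 𝔽₂ is irreducible if and only if l = 4. -/
/-!
With `n = l + 1` the polynomial is `(X ^ (5 * n) - 1) / (X ^ 5 - 1)`, that is, the product of the
cyclotomic polynomials `Φ_d` over the divisors `d` of `5 * n` that do not divide `5`. If `n` is
neither `1` nor `5`, both `n` and `5 * n` are such divisors, so the product is reducible; for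
`n = 1` it is the unit `1`. For `n = 5` the polynomial is `Φ₂₅`, which is irreducible over `𝔽₂`
because `2` is a primitive root modulo `25`: every irreducible factor of `Φ₂₅` has degree equal to
the order of `2` in `(ℤ/25)ˣ`, which is `20 = φ(25)`.
-/

open Polynomial

/-- The product formula for `(X ^ (5 * n) - 1) / (X ^ 5 - 1)` with `n = l + 1`. -/
theorem sum_eq_prod_cyclotomic (l : ℕ) :
    (∑ i ∈ Finset.range (l + 1), X ^ (5 * i) : Polynomial (ZMod 2)) =
      ∏ d ∈ (5 * (l + 1)).divisors \ Nat.divisors 5, cyclotomic d (ZMod 2) := by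
  have h5 : (X ^ 5 - 1 : Polynomial (ZMod 2)) ≠ 0 := by
    simpa using X_pow_sub_C_ne_zero (R := ZMod 2) (by norm_num : 0 < 5) 1
  apply mul_left_cancel₀ h5
  rw [X_pow_sub_one_mul_prod_cyclotomic_eq_X_pow_sub_one_of_dvd (ZMod 2)
    (dvd_mul_right 5 (l + 1)) (by positivity)]
  simp_rw [pow_mul]
  rw [mul_geom_sum]

theorem not_isUnit_cyclotomic {d : ℕ} (hd : 0 < d) : ¬ IsUnit (cyclotomic d (ZMod 2)) := by
  apply not_isUnit_of_natDegree_pos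
  rw [natDegree_cyclotomic]
  exact Nat.totient_pos.mpr hd

/-- Holds because `2` has order `20 = φ(25)` modulo `25`. -/
theorem irreducible_cyclotomic_25 : Irreducible (cyclotomic 25 (ZMod 2)) := by
  refine ZMod.irreducible_of_dvd_cyclotomic_of_natDegree (p := 2) (n := 25) (by norm_num)
    dvd_rfl ?_
  rw [natDegree_cyclotomic, show Nat.totient 25 = 20 by decide, eq_comm,
    orderOf_eq_iff (by norm_num)]
  simp only [ne_eq, Units.ext_iff, Units.val_pow_eq_pow_val, ZMod.coe_unitOfCoprime,
    Units.val_one]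
  decide

theorem stmt11 (l : ℕ) :
    Irreducible (∑ i ∈ Finset.range (l + 1), X ^ (5 * i) : Polynomial (ZMod 2)) ↔
      l = 4 := by
  constructor
  · intro h
    by_contra hl
    have hl0 : l ≠ 0 := by
      rintro rfl
      simp at h
    have hn : l + 1 ∉ Nat.divisors 5 := by
      rw [Nat.Prime.divisors (by norm_num)]
      simp only [Finset.mem_insert, Finset.mem_singleton]
      omega
    have hn5 : 5 * (l + 1) ∉ Nat.divisors 5 := by
      rw [Nat.Prime.divisors (by norm_num)]
      simp only [Finset.mem_insert, Finset.mem_singleton]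
      omega
    have h1 : l + 1 ∈ (5 * (l + 1)).divisors \ Nat.divisors 5 := by
      simp only [Finset.mem_sdiff, hn, not_false_eq_true, and_true]
      exact Nat.mem_divisors.mpr ⟨dvd_mul_left _ _, by positivity⟩
    have h2 : 5 * (l + 1) ∈ ((5 * (l + 1)).divisors \ Nat.divisors 5).erase (l + 1) := by
      rw [Finset.mem_erase, Finset.mem_sdiff]
      exact ⟨by omega, Nat.mem_divisors_self _ (by positivity), hn5⟩
    rw [sum_eq_prod_cyclotomic, ← Finset.mul_prod_erase _ _ h1] at h
    rcases h.isUnit_or_isUnit rfl with hu | hu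
    · exact not_isUnit_cyclotomic (by positivity) hu
    · exact not_isUnit_cyclotomic (by positivity)
        (isUnit_of_dvd_unit (Finset.dvd_prod_of_mem (fun d => cyclotomic d (ZMod 2)) h2) hu)
  · rintro rfl
    have h := cyclotomic_prime_pow_eq_geom_sum (R := ZMod 2) (p := 5) (n := 1) (by norm_num)
    simp_rw [pow_one, ← pow_mul] at h
    rw [← h]
    exact irreducible_cyclotomic_25
end

section
/- Let r be a positive integer. The polynomial Q(x) = 1 + x + x² + ⋯ + x^(3·2^r) over 𝔽₂ is irreducible if and only if r = 2. -/
/-!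
Let `n = 3 * 2 ^ r + 1`, so that the sum is `Q = (X ^ n - 1) / (X - 1)`, of degree `n - 1`.

If `Q` is irreducible, then `n` is prime, since for the least prime factor `p` of `n` the cyclotomic
polynomial `Φ_p`, of degree `p - 1`, divides `Q`. Hence `Q = Φ_n`, and over `𝔽₂` every irreducible
factor of `Φ_n` has degree the order of `2` modulo `n`
(`Polynomial.natDegree_of_dvd_cyclotomic_of_irreducible`). So `Q` is irreducible exactly when `n` is
prime and `2` is a primitive root modulo `n`.

For `r = 1`, `2 ^ 3 = 1` modulo `7`. For `r ≥ 3`, `n ≡ 1 (mod 8)`, so `2` is a quadratic residue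
modulo `n` and has order at most `(n - 1) / 2`. For `r = 2`, `2` is a primitive root modulo `13`.
-/

open Polynomial

theorem natDegree_geom_sum_zmod_two {n : ℕ} (hn : 0 < n) :
    (∑ i ∈ Finset.range n, X ^ i : Polynomial (ZMod 2)).natDegree = n - 1 := by
  have h := (monic_geom_sum_X (R := ZMod 2) hn.ne').natDegree_mul (monic_X_sub_C 1)
  rw [C_1, geom_sum_mul, ← C_1, natDegree_X_pow_sub_C, natDegree_X_sub_C] at h
  omega

theorem prime_of_irreducible_geom_sum {n : ℕ} (hn : 1 < n)
    (h : Irreducible (∑ i ∈ Finset.range n, X ^ i : Polynomial (ZMod 2))) : n.Prime := by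
  have hp : n.minFac.Prime := Nat.minFac_prime hn.ne'
  have hdeg : (cyclotomic n.minFac (ZMod 2)).natDegree = n.minFac - 1 := by
    rw [natDegree_cyclotomic, Nat.totient_prime hp]
  have hu : ¬ IsUnit (cyclotomic n.minFac (ZMod 2)) := by
    refine not_isUnit_of_natDegree_pos _ ?_
    have := hp.two_le
    omega
  have ha := (h.dvd_iff.mp (cyclotomic_dvd_geom_sum_of_dvd (ZMod 2) n.minFac_dvd
    hp.ne_one)).resolve_left hu
  have h2 := natDegree_eq_of_degree_eq (degree_eq_degree_of_associated ha)
  rw [hdeg, natDegree_geom_sum_zmod_two (by omega)] at h2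
  have := hp.two_le
  have h3 : n.minFac = n := by omega
  exact h3 ▸ hp

/-- Over `𝔽₂`, irreducibility of the geometric sum forces `2` to be a primitive root modulo `n`. -/
theorem sub_one_le_of_two_pow_eq_one {n m : ℕ} (hn : 2 < n) (hm : 0 < m)
    (hpow : (2 : ZMod n) ^ m = 1)
    (h : Irreducible (∑ i ∈ Finset.range n, X ^ i : Polynomial (ZMod 2))) : n - 1 ≤ m := by
  have hp := prime_of_irreducible_geom_sum (by omega) h
  have : Fact n.Prime := ⟨hp⟩
  have hc : Nat.Coprime 2 n := (Nat.coprime_primes Nat.prime_two hp).mpr (by omega)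
  have h1 := natDegree_of_dvd_cyclotomic_of_irreducible (K := ZMod 2) (p := 2) (f := 1)
    (by simp) hc (cyclotomic_prime (ZMod 2) n).symm.dvd h
  rw [natDegree_geom_sum_zmod_two (by omega)] at h1
  rw [h1]
  refine Nat.le_of_dvd hm (orderOf_dvd_of_pow_eq_one ?_)
  ext
  simpa using hpow

theorem irreducible_geom_sum_thirteen :
    Irreducible (∑ i ∈ Finset.range 13, X ^ i : Polynomial (ZMod 2)) := by
  have : Fact (Nat.Prime 13) := ⟨by norm_num⟩
  refine ZMod.irreducible_of_dvd_cyclotomic_of_natDegree (p := 2) (n := 13) (by norm_num)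
    (cyclotomic_prime (ZMod 2) 13).symm.dvd ?_
  rw [natDegree_geom_sum_zmod_two (by norm_num)]
  refine (orderOf_eq_of_pow_and_pow_div_prime (n := 12) (by norm_num) (by decide) ?_).symm
  intro p hp hd
  have hle := Nat.le_of_dvd (by norm_num) hd
  interval_cases p <;> revert hp hd <;> decide

theorem stmt12 (r : ℕ) (hr : 0 < r) :
    Irreducible (∑ i ∈ Finset.range (3 * 2 ^ r + 1), X ^ i : Polynomial (ZMod 2)) ↔
      r = 2 := by
  constructor
  · intro h
    by_contra hr2
    obtain rfl | hr3 : r = 1 ∨ 3 ≤ r := by omega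
    · have := sub_one_le_of_two_pow_eq_one (n := 7) (m := 3) (by norm_num) (by norm_num)
        (by decide) h
      omega
    · obtain ⟨k, rfl⟩ := Nat.exists_eq_add_of_le hr3
      have hk : 0 < 2 ^ k := by positivity
      have hn : 3 * 2 ^ (3 + k) + 1 = 24 * 2 ^ k + 1 := by ring
      rw [hn] at h
      have hp := prime_of_irreducible_geom_sum (by omega) h
      have : Fact (24 * 2 ^ k + 1).Prime := ⟨hp⟩
      have hsq : IsSquare (2 : ZMod (24 * 2 ^ k + 1)) :=
        (ZMod.exists_sq_eq_two_iff (by omega)).mpr (by omega)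
      have h20 : (2 : ZMod (24 * 2 ^ k + 1)) ≠ 0 := by
        intro h0
        have := Nat.le_of_dvd (by norm_num)
          ((ZMod.natCast_eq_zero_iff 2 (24 * 2 ^ k + 1)).mp (by exact_mod_cast h0))
        omega
      have := sub_one_le_of_two_pow_eq_one (by omega) (by omega)
        ((ZMod.euler_criterion _ h20).mp hsq) h
      omega
  · rintro rfl
    exact irreducible_geom_sum_thirteen
end

section
/- Let h ∈ ℕ. If 1 + x + x² + ⋯ + x^h = 1 + (x+1) + (x+1)² + ⋯ + (x+1)^h in 𝔽₂[x], then h = 2^n − 2 for some n ∈ ℕ. -/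
/-!
Over `𝔽₂`, summing both geometric series and clearing the denominators `X + 1` and `X` turns the
hypothesis into `(X + 1) ^ (h + 2) = X ^ (h + 2) + 1`. Write `h + 2 = 2 ^ a * b` with `b` odd. Both
sides are `2 ^ a`-th powers, so injectivity of the Frobenius map gives `(X + 1) ^ b = X ^ b + 1`.
The coefficient of `X` on the left is `b = 1` in `𝔽₂`, while on the right it vanishes unless
`b = 1`. Hence `h + 2 = 2 ^ a`.
-/

open Polynomial

theorem stmt19 (h : ℕ)
    (heq : (∑ i ∈ Finset.range (h + 1), X ^ i : Polynomial (ZMod 2)) =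
      ∑ i ∈ Finset.range (h + 1), (X + 1) ^ i) :
    ∃ n : ℕ, h = 2 ^ n - 2 := by
  have h2 : (2 : (ZMod 2)[X]) = 0 := CharTwo.two_eq_zero
  have e1 := geom_sum_mul (X : (ZMod 2)[X]) (h + 1)
  have e2 := geom_sum_mul (X + 1 : (ZMod 2)[X]) (h + 1)
  rw [← heq] at e2
  have key : (X + 1 : (ZMod 2)[X]) ^ (h + 2) = X ^ (h + 2) + 1 := by
    rw [pow_succ _ (h + 1), pow_succ _ (h + 1)]
    linear_combination X * e1 - (X + 1) * e2 +
      X * (∑ i ∈ Finset.range (h + 1), X ^ i) * h2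
  obtain ⟨a, b, hb, hab⟩ := Nat.exists_eq_two_pow_mul_odd (n := h + 2) (by omega)
  have key' : (X + 1 : (ZMod 2)[X]) ^ b = X ^ b + 1 := by
    rw [← sub_eq_zero]
    refine pow_eq_zero_iff (n := 2 ^ a) (by positivity) |>.1 ?_
    rw [sub_pow_char_pow, add_pow_char_pow, one_pow, ← pow_mul, ← pow_mul, mul_comm b, ← hab, key,
      sub_self]
  have hb1 : b = 1 := by
    by_contra hne
    have hc := congrArg (fun p => coeff p 1) key'
    simp [coeff_X_add_one_pow, coeff_X_pow, coeff_one, Ne.symm hne] at hc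
    exact (ZMod.natCast_ne_zero_iff_odd.2 hb) hc
  exact ⟨a, by rw [hb1] at hab; omega⟩
end
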